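/- arXiv:2503.16246 — 4 statements merged into one kernel-verified Lean document; each statement's English description precedes it below -/
import Mathlib

section
/- Define k(p) = −2·√((p + 1)/p) + log(1/2 + p + √(p² + p)) for p > 0. Then for all real numbers p, q with 1 ≤ q ≤ p, k(p) − k(q) ≤ 6·log(1 + p). -/
/-- Inequality (3.18): with `k(p) = −2√((p+1)/p) + log(1/2 + p + √(p² + p))`,
for all `1 ≤ q ≤ p` one has `k(p) − k(q) ≤ 6 log(1 + p)`. -/
theorem stmt_11
    (k : ℝ → ℝ)
    (hk : ∀ p : ℝ, 0 < p →
      k p = -2 * Real.sqrt ((p + 1) / p) + Real.log (1 / 2 + p + Real.sqrt (p ^ 2 + p)))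
    (q p : ℝ) (hq : 1 ≤ q) (hqp : q ≤ p) :
    k p - k q ≤ 6 * Real.log (1 + p) := by
  have hp : 1 ≤ p := hq.trans hqp
  have hq0 : 0 < q := by linarith
  have hp0 : 0 < p := by linarith
  rw [hk p hp0, hk q hq0]
  have h1 : 1 ≤ Real.sqrt ((p + 1) / p) := by
    rw [Real.one_le_sqrt, le_div_iff₀ hp0]
    linarith
  have h2 : Real.sqrt ((q + 1) / q) ≤ 3 / 2 := by
    rw [Real.sqrt_le_left (by norm_num), div_le_iff₀ hq0]
    linarith
  have h3 : Real.sqrt (p ^ 2 + p) ≤ p + 1 := by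
    rw [Real.sqrt_le_left (by linarith)]
    nlinarith
  have h4 : 1 ≤ Real.sqrt (q ^ 2 + q) := by
    rw [Real.one_le_sqrt]
    nlinarith
  have h5 : Real.log (1 / 2 + p + Real.sqrt (p ^ 2 + p)) ≤ Real.log 2 + Real.log (1 + p) := by
    rw [← Real.log_mul (by norm_num) (by linarith)]
    exact Real.log_le_log (by positivity) (by linarith)
  have h6 : Real.log 2 ≤ Real.log (1 / 2 + q + Real.sqrt (q ^ 2 + q)) :=
    Real.log_le_log (by norm_num) (by linarith)
  have h7 : Real.log 2 ≤ Real.log (1 + p) :=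
    Real.log_le_log (by norm_num) (by linarith)
  have h8 := Real.log_two_gt_d9
  linarith
end

section
/- Let n ≥ 4 be a natural number and let p, q be real numbers with 1 ≤ q ≤ p. Then ∫_q^p (s + 1)^{1/(n−2)}·s^{−3/2} ds ≤ 6·log(1 + p). -/
/-- Combined steps (3.16)–(3.18): for `n ≥ 4` and `1 ≤ q ≤ p`,
`∫_q^p (s+1)^(1/(n−2)) s^(−3/2) ds ≤ 6 log(1 + p)`. -/
theorem stmt_12 (n : ℕ) (hn : 4 ≤ n) (q p : ℝ) (hq : 1 ≤ q) (hqp : q ≤ p) :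
    (∫ s in q..p, (s + 1) ^ ((1 : ℝ) / ((n : ℝ) - 2)) * s ^ (-(3 : ℝ) / 2)) ≤
      6 * Real.log (1 + p) := by
  have hn' : (4 : ℝ) ≤ n := by exact_mod_cast hn
  have ha : (1 : ℝ) / ((n : ℝ) - 2) ≤ 1 / 2 :=
    one_div_le_one_div_of_le (by norm_num) (by linarith)
  have hpt : ∀ s ∈ Set.Icc q p,
      (s + 1) ^ ((1 : ℝ) / ((n : ℝ) - 2)) * s ^ (-(3 : ℝ) / 2) ≤ 2 * s⁻¹ := by
    intro s hs
    have h1 : 1 ≤ s := hq.trans hs.1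
    have h0 : 0 < s := by linarith
    have e1 : (s + 1) ^ ((1 : ℝ) / ((n : ℝ) - 2)) ≤ 2 * s ^ ((1 : ℝ) / 2) := by
      calc (s + 1) ^ ((1 : ℝ) / ((n : ℝ) - 2)) ≤ (s + 1) ^ ((1 : ℝ) / 2) :=
            Real.rpow_le_rpow_of_exponent_le (by linarith) ha
        _ ≤ (2 ^ 2 * s) ^ ((1 : ℝ) / 2) :=
            Real.rpow_le_rpow (by linarith) (by linarith) (by norm_num)
        _ = 2 * s ^ ((1 : ℝ) / 2) := by
            rw [← Real.sqrt_eq_rpow, ← Real.sqrt_eq_rpow, Real.sqrt_mul (by norm_num),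
              Real.sqrt_sq (by norm_num)]
    calc _ ≤ 2 * s ^ ((1 : ℝ) / 2) * s ^ (-(3 : ℝ) / 2) :=
          mul_le_mul_of_nonneg_right e1 (Real.rpow_nonneg h0.le _)
      _ = 2 * s⁻¹ := by
          rw [mul_assoc, ← Real.rpow_add h0, ← Real.rpow_neg_one]
          norm_num
  have hpos : ∀ s ∈ Set.uIcc q p, 0 < s := by
    intro s hs
    rw [Set.uIcc_of_le hqp] at hs
    linarith [hs.1]
  have i1 : IntervalIntegrable
      (fun s : ℝ => (s + 1) ^ ((1 : ℝ) / ((n : ℝ) - 2)) * s ^ (-(3 : ℝ) / 2))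
      MeasureTheory.volume q p := by
    apply ContinuousOn.intervalIntegrable
    apply ContinuousOn.mul
    · exact ContinuousOn.rpow_const (by fun_prop) fun s hs => Or.inl (by linarith [hpos s hs])
    · exact ContinuousOn.rpow_const (by fun_prop) fun s hs => Or.inl (hpos s hs).ne'
  have i2 : IntervalIntegrable (fun s : ℝ => 2 * s⁻¹) MeasureTheory.volume q p := by
    apply ContinuousOn.intervalIntegrable
    exact continuousOn_const.mul (continuousOn_id.inv₀ fun s hs => (hpos s hs).ne')
  refine (intervalIntegral.integral_mono_on hqp i1 i2 hpt).trans ?_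
  have hq0 : 0 < q := by linarith
  have hp0 : 0 < p := by linarith
  rw [intervalIntegral.integral_const_mul, integral_inv_of_pos hq0 hp0,
    Real.log_div hp0.ne' hq0.ne']
  have l1 := Real.log_nonneg hq
  have l2 : Real.log p ≤ Real.log (1 + p) := Real.log_le_log hp0 (by linarith)
  have l3 : 0 ≤ Real.log (1 + p) := Real.log_nonneg (by linarith)
  linarith
end

section
/- Let n ≥ 2 be a natural number, let m, c, A > 0 and ξ ≥ 1 be real numbers, let h₀ ≤ h₁ be reals, and let Y : [h₀, h₁] → ℝ be a differentiable function such that for every h ∈ [h₀, h₁], setting p(h) := (c/(2m))·√(Y(h)/A) − 1, one has p(h) ≥ ξ and Y′(h) ≥ (4(n−1)·A·m/(3√3))·p(h)^{3/2}. Then h₁ − h₀ ≤ (6√6/((n−1)·c^{3/2}·A^{1/4}))·m^{1/2}·Y(h₁)^{1/4}. -/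
/-- ODE-comparison core of the height-bound lemma (Lemma 3.2), case `n_ε = 1/2`:
if on `[h₀, h₁]` the function `Y` is differentiable with derivative `Y'`, and with
`p(h) := (c/(2m))√(Y(h)/A) − 1` one has `p(h) ≥ ξ ≥ 1` and
`Y'(h) ≥ (4(n−1)Am/(3√3)) p(h)^(3/2)`, then
`h₁ − h₀ ≤ (6√6/((n−1) c^(3/2) A^(1/4))) m^(1/2) Y(h₁)^(1/4)`. -/
theorem stmt_13 (n : ℕ) (hn : 2 ≤ n) (m c A ξ : ℝ)
    (hm : 0 < m) (hc : 0 < c) (hA : 0 < A) (hξ : 1 ≤ ξ)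
    (h₀ h₁ : ℝ) (hh : h₀ ≤ h₁) (Y Y' : ℝ → ℝ)
    (hderiv : ∀ h ∈ Set.Icc h₀ h₁, HasDerivAt Y (Y' h) h)
    (hp : ∀ h ∈ Set.Icc h₀ h₁, ξ ≤ c / (2 * m) * Real.sqrt (Y h / A) - 1)
    (hY' : ∀ h ∈ Set.Icc h₀ h₁,
      Y' h ≥ 4 * ((n : ℝ) - 1) * A * m / (3 * Real.sqrt 3) *
        (c / (2 * m) * Real.sqrt (Y h / A) - 1) ^ ((3 : ℝ) / 2)) :
    h₁ - h₀ ≤ 6 * Real.sqrt 6 / (((n : ℝ) - 1) * c ^ ((3 : ℝ) / 2) * A ^ ((1 : ℝ) / 4)) *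
      m ^ ((1 : ℝ) / 2) * (Y h₁) ^ ((1 : ℝ) / 4) := by
  have hN : (0 : ℝ) < (n : ℝ) - 1 := by
    have : (2 : ℝ) ≤ n := by exact_mod_cast hn
    linarith
  have hs3 : 0 < Real.sqrt 3 := Real.sqrt_pos.mpr (by norm_num)
  have hk : 0 < c / (2 * m) := by positivity
  have hspos : ∀ h ∈ Set.Icc h₀ h₁, 0 < Real.sqrt (Y h / A) := by
    intro h hh'
    have h1 := hp h hh'
    by_contra hcon
    push Not at hcon
    have := mul_nonpos_of_nonneg_of_nonpos hk.le hcon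
    linarith
  set p : ℝ → ℝ := fun h => c / (2 * m) * Real.sqrt (Y h / A) - 1 with hpdef
  have hp1 : ∀ h ∈ Set.Icc h₀ h₁, 1 ≤ p h := fun h hh' => hξ.trans (hp h hh')
  set G : ℝ → ℝ := fun h => 2 * Real.sqrt (p h) - 2 * (Real.sqrt (p h))⁻¹ with hG
  have hGd : ∀ h ∈ Set.Icc h₀ h₁,
      HasDerivAt G (c ^ 2 * Y' h / (8 * m ^ 2 * A * Real.sqrt (p h) ^ 3)) h := by
    intro h hh'
    have hs := hspos h hh'
    have hph : 0 < p h := lt_of_lt_of_le one_pos (hp1 h hh')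
    have hq : 0 < Real.sqrt (p h) := Real.sqrt_pos.mpr hph
    have hq2 : Real.sqrt (p h) ^ 2 = c / (2 * m) * Real.sqrt (Y h / A) - 1 :=
      Real.sq_sqrt hph.le
    have d1 : HasDerivAt p (c / (2 * m) * (Y' h / A / (2 * Real.sqrt (Y h / A)))) h :=
      ((((hderiv h hh').div_const A).sqrt (Real.sqrt_pos.mp hs).ne').const_mul _).sub_const 1
    have d2 := d1.sqrt hph.ne'
    have d3 := (d2.const_mul 2).sub ((d2.inv hq.ne').const_mul 2)
    refine d3.congr_deriv ?_
    generalize Real.sqrt (p h) = q at *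
    generalize Real.sqrt (Y h / A) = s at *
    have hs' : s = (q ^ 2 + 1) * (2 * m) / c := by
      rw [hq2]; field_simp; ring
    have : 0 < q ^ 2 + 1 := by positivity
    rw [hs']
    field_simp
    ring
  have key := Convex.mul_sub_le_image_sub_of_le_deriv (convex_Icc h₀ h₁)
    (f := G) (C := ((n : ℝ) - 1) * c ^ 2 / (6 * Real.sqrt 3 * m))
    (fun h hh' => (hGd h hh').continuousAt.continuousWithinAt)
    (fun h hh' => (hGd h (interior_subset hh')).differentiableAt.differentiableWithinAt)
    (by
      intro h hh'
      have hh' := interior_subset hh'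
      rw [(hGd h hh').deriv]
      have hph : 0 < p h := lt_of_lt_of_le one_pos (hp1 h hh')
      have hq : 0 < Real.sqrt (p h) := Real.sqrt_pos.mpr hph
      have hy := hY' h hh'
      have e : (c / (2 * m) * Real.sqrt (Y h / A) - 1) ^ ((3 : ℝ) / 2)
          = Real.sqrt (p h) ^ 3 := by
        change (p h) ^ ((3 : ℝ) / 2) = _
        rw [Real.sqrt_eq_rpow, ← Real.rpow_natCast, ← Real.rpow_mul hph.le]
        norm_num
      rw [e] at hy
      generalize Real.sqrt (p h) = q at *
      rw [le_div_iff₀ (by positivity)]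
      calc _ = c ^ 2 * (4 * ((n : ℝ) - 1) * A * m / (3 * Real.sqrt 3) * q ^ 3) := by
            field_simp; ring
        _ ≤ _ := by gcongr)
    h₀ (Set.left_mem_Icc.mpr hh) h₁ (Set.right_mem_Icc.mpr hh) hh
  have hG0 : 0 ≤ G h₀ := by
    have : 1 ≤ Real.sqrt (p h₀) := Real.one_le_sqrt.mpr (hp1 h₀ (Set.left_mem_Icc.mpr hh))
    have h2 := inv_le_one_of_one_le₀ this
    simp only [hG]
    linarith
  have hm1 := Set.right_mem_Icc.mpr hh
  have hYA := Real.sqrt_pos.mp (hspos h₁ hm1)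
  have hY : 0 < Y h₁ := by
    have := mul_pos hYA hA
    rwa [div_mul_cancel₀ _ hA.ne'] at this
  obtain ⟨a, ha, hca, hc3⟩ : ∃ a : ℝ, 0 < a ∧ c = a ^ 2 ∧ c ^ ((3 : ℝ) / 2) = a ^ 3 := by
    refine ⟨Real.sqrt c, Real.sqrt_pos.mpr hc, (Real.sq_sqrt hc.le).symm, ?_⟩
    rw [Real.sqrt_eq_rpow, ← Real.rpow_natCast, ← Real.rpow_mul hc.le]
    norm_num
  obtain ⟨b, hb, hmb, hm2⟩ : ∃ b : ℝ, 0 < b ∧ m = b ^ 2 ∧ m ^ ((1 : ℝ) / 2) = b :=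
    ⟨Real.sqrt m, Real.sqrt_pos.mpr hm, (Real.sq_sqrt hm.le).symm, (Real.sqrt_eq_rpow m).symm⟩
  have four : ∀ x : ℝ, 0 < x → ∃ y : ℝ, 0 < y ∧ x = y ^ 4 ∧ x ^ ((1 : ℝ) / 4) = y := by
    intro x hx
    refine ⟨x ^ ((1 : ℝ) / 4), by positivity, ?_, rfl⟩
    rw [← Real.rpow_natCast, ← Real.rpow_mul hx.le]
    norm_num
  obtain ⟨α, hα, hAα, hA4⟩ := four A hA
  obtain ⟨y, hy, hYy, hY4⟩ := four (Y h₁) hY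
  have hs2 : 0 < Real.sqrt 2 := Real.sqrt_pos.mpr (by norm_num)
  have hs22 : Real.sqrt 2 ^ 2 = 2 := Real.sq_sqrt (by norm_num)
  have hs33 : Real.sqrt 3 ^ 2 = 3 := Real.sq_sqrt (by norm_num)
  have hs6 : Real.sqrt 6 = Real.sqrt 2 * Real.sqrt 3 := by
    rw [← Real.sqrt_mul (by norm_num)]; norm_num
  have hsq : Real.sqrt (Y h₁ / A) = (y / α) ^ 2 := by
    rw [hYy, hAα, show y ^ 4 / α ^ 4 = ((y / α) ^ 2) ^ 2 by ring]
    exact Real.sqrt_sq (by positivity)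
  have hqle : Real.sqrt (p h₁) ≤ a * y / (Real.sqrt 2 * b * α) := by
    apply Real.sqrt_le_iff.mpr
    refine ⟨by positivity, ?_⟩
    simp only [hpdef]
    rw [hsq, hca, hmb]
    have : (a * y / (Real.sqrt 2 * b * α)) ^ 2 = a ^ 2 / (2 * b ^ 2) * (y / α) ^ 2 := by
      rw [div_pow, mul_pow (Real.sqrt 2 * b), mul_pow (Real.sqrt 2), hs22]
      field_simp
    linarith
  have hG1 : G h₁ ≤ 2 * (a * y / (Real.sqrt 2 * b * α)) := by
    have : 0 ≤ (Real.sqrt (p h₁))⁻¹ := by positivity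
    simp only [hG]
    linarith
  have key2 : ((n : ℝ) - 1) * c ^ 2 / (6 * Real.sqrt 3 * m) * (h₁ - h₀) ≤
      2 * (a * y / (Real.sqrt 2 * b * α)) := by linarith
  have hC : 0 < ((n : ℝ) - 1) * c ^ 2 / (6 * Real.sqrt 3 * m) := by positivity
  rw [hc3, hm2, hA4, hY4, hs6]
  refine le_of_mul_le_mul_left (key2.trans (le_of_eq ?_)) hC
  rw [hca, hmb]
  field_simp
  try linarith [hs22]
end

section
/- Let n ≥ 4 be a natural number, let m, c, A > 0 and ξ ≥ 1 be real numbers, let h₀ ≤ h₁ be reals, and let Y : [h₀, h₁] → ℝ be a differentiable function such that for every h ∈ [h₀, h₁], setting p(h) := (c/(2m))·(Y(h)/A)^{(n−2)/(n−1)} − 1, one has p(h) ≥ ξ and Y′(h) ≥ (4(n−1)·A·m/(3√3))·p(h)^{3/2}. Then h₁ − h₀ ≤ (9√3·2^{1/(n−2)}/((n−2)·c^{(n−1)/(n−2)}))·m^{1/(n−2)}·log(1 + p(h₁)). -/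
/-- ODE-comparison core of the height-bound lemma (Lemma 3.2), case
`n_ε = (n−2)/(n−1)` for `n ≥ 4`: if on `[h₀, h₁]` the function `Y` is differentiable
with derivative `Y'`, and with `p(h) := (c/(2m))(Y(h)/A)^((n−2)/(n−1)) − 1` one has
`p(h) ≥ ξ ≥ 1` and `Y'(h) ≥ (4(n−1)Am/(3√3)) p(h)^(3/2)`, then
`h₁ − h₀ ≤ (9√3 · 2^(1/(n−2)) / ((n−2) c^((n−1)/(n−2)))) m^(1/(n−2)) log(1 + p(h₁))`. -/
theorem stmt_14 (n : ℕ) (hn : 4 ≤ n) (m c A ξ : ℝ)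
    (hm : 0 < m) (hc : 0 < c) (hA : 0 < A) (hξ : 1 ≤ ξ)
    (h₀ h₁ : ℝ) (hh : h₀ ≤ h₁) (Y Y' : ℝ → ℝ)
    (hderiv : ∀ h ∈ Set.Icc h₀ h₁, HasDerivAt Y (Y' h) h)
    (hp : ∀ h ∈ Set.Icc h₀ h₁,
      ξ ≤ c / (2 * m) * (Y h / A) ^ (((n : ℝ) - 2) / ((n : ℝ) - 1)) - 1)
    (hY' : ∀ h ∈ Set.Icc h₀ h₁,
      Y' h ≥ 4 * ((n : ℝ) - 1) * A * m / (3 * Real.sqrt 3) *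
        (c / (2 * m) * (Y h / A) ^ (((n : ℝ) - 2) / ((n : ℝ) - 1)) - 1) ^ ((3 : ℝ) / 2)) :
    h₁ - h₀ ≤
      9 * Real.sqrt 3 * (2 : ℝ) ^ ((1 : ℝ) / ((n : ℝ) - 2)) /
          (((n : ℝ) - 2) * c ^ (((n : ℝ) - 1) / ((n : ℝ) - 2))) *
        m ^ ((1 : ℝ) / ((n : ℝ) - 2)) *
        Real.log (1 + (c / (2 * m) * (Y h₁ / A) ^ (((n : ℝ) - 2) / ((n : ℝ) - 1)) - 1)) := by
  have hn' : (4 : ℝ) ≤ n := by exact_mod_cast hn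
  set N : ℝ := (n : ℝ) with hN
  clear_value N
  have hN1 : 0 < N - 1 := by linarith
  have hN2 : 0 < N - 2 := by linarith
  set q : ℝ := (N - 2) / (N - 1) with hq
  have hq0 : 0 < q := div_pos hN2 hN1
  have hq1 : q < 1 := by rw [hq, div_lt_one hN1]; linarith
  have hq2 : 1 / 2 < q := by rw [hq, lt_div_iff₀ hN1]; linarith
  set a : ℝ := 1 / (N - 2) with ha
  have ha0 : 0 < a := by positivity
  have ha1 : a ≤ 1 / 2 := by rw [ha, div_le_div_iff₀ hN2 (by norm_num)]; linarith
  have hb : (N - 1) / (N - 2) = 1 + a := by rw [ha]; field_simp; ring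
  have hqb : q * (1 + a) = 1 := by rw [← hb, hq]; field_simp
  rw [hb]
  have hcm : 0 < c / (2 * m) := by positivity
  have hYpos : ∀ h ∈ Set.Icc h₀ h₁, 0 < Y h := by
    intro h hh'
    by_contra hcon
    push Not at hcon
    have h1 := hp h hh'
    have h2 : (Y h / A) ^ q ≤ 0 := by
      rcases hcon.lt_or_eq with hlt | heq
      · rw [Real.rpow_def_of_neg (div_neg_of_neg_of_pos hlt hA)]
        apply mul_nonpos_of_nonneg_of_nonpos (Real.exp_pos _).le
        apply Real.cos_nonpos_of_pi_div_two_le_of_le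
        · nlinarith [Real.pi_pos]
        · nlinarith [Real.pi_pos]
      · rw [heq, zero_div, Real.zero_rpow hq0.ne']
    nlinarith
  set B : ℝ := 2 ^ a * m ^ a / c ^ (1 + a) with hB
  have hB0 : 0 < B := by positivity
  have hs3 : 0 < Real.sqrt 3 := by positivity
  have hpow2 : (2 : ℝ) ^ ((3 : ℝ) / 2) ≤ 3 := by
    have : ((2 : ℝ) ^ ((3 : ℝ) / 2)) ^ 2 = 8 := by
      rw [← Real.rpow_natCast, ← Real.rpow_mul (by norm_num)]
      norm_num
    nlinarith [Real.rpow_pos_of_pos (show (0 : ℝ) < 2 by norm_num) ((3 : ℝ) / 2)]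
  set K : ℝ := (N - 2) / (9 * Real.sqrt 3 * B) with hK
  have hK0 : 0 < K := by positivity
  have hder : ∀ h ∈ Set.Icc h₀ h₁, K / q ≤ Y' h / Y h := by
    intro h hh'
    have hY := hYpos h hh'
    have h1 := hp h hh'
    have h2 := hY' h hh'
    set u : ℝ := Y h / A with hu
    have hu0 : 0 < u := div_pos hY hA
    set p : ℝ := c / (2 * m) * u ^ q - 1 with hpdef
    have hp1 : 1 ≤ p := hξ.trans h1
    have hup : u ^ q = 2 * m / c * (p + 1) := by
      rw [hpdef]; field_simp; ring
    have hue : u = (2 * m / c) ^ (1 + a) * (p + 1) ^ (1 + a) := by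
      rw [← Real.mul_rpow (by positivity) (by linarith), ← hup, ← Real.rpow_mul hu0.le, hqb,
        Real.rpow_one]
    have hcB : (2 * m / c) ^ (1 + a) = 2 * m * B := by
      rw [Real.div_rpow (by positivity) hc.le, Real.rpow_add (by positivity), Real.rpow_one,
        Real.mul_rpow (by norm_num) hm.le, hB]
      ring
    have hP : (p + 1) ^ (1 + a) ≤ 3 * p ^ ((3 : ℝ) / 2) := by
      calc (p + 1) ^ (1 + a) ≤ (p + 1) ^ ((3 : ℝ) / 2) :=
            Real.rpow_le_rpow_of_exponent_le (by linarith) (by linarith)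
        _ ≤ (2 * p) ^ ((3 : ℝ) / 2) :=
            Real.rpow_le_rpow (by linarith) (by linarith) (by norm_num)
        _ = 2 ^ ((3 : ℝ) / 2) * p ^ ((3 : ℝ) / 2) := Real.mul_rpow (by norm_num) (by linarith)
        _ ≤ 3 * p ^ ((3 : ℝ) / 2) := by gcongr
    have hule : u ≤ 2 * m * B * (3 * p ^ ((3 : ℝ) / 2)) := by
      rw [hue, hcB]; gcongr
    set r := p ^ ((3 : ℝ) / 2) with hr
    have hr0 : 0 < r := by positivity
    have hYu : Y h = A * u := by rw [hu]; field_simp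
    rw [le_div_iff₀ hY, hYu]
    refine le_trans ?_ h2
    calc K / q * (A * u) ≤ K / q * (A * (2 * m * B * (3 * r))) := by gcongr
      _ = 2 * (N - 1) * A * m / (3 * Real.sqrt 3) * r := by
          rw [hK, hq]; field_simp; ring
      _ ≤ 4 * (N - 1) * A * m / (3 * Real.sqrt 3) * r := by gcongr; norm_num
  have hlogd : ∀ h ∈ Set.Icc h₀ h₁, HasDerivAt (fun x => Real.log (Y x)) (Y' h / Y h) h :=
    fun h hh' => (hderiv h hh').log (hYpos h hh').ne'
  have hmvt := Convex.mul_sub_le_image_sub_of_le_deriv (convex_Icc h₀ h₁)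
    (f := fun x => Real.log (Y x))
    (fun x hx => (hlogd x hx).continuousAt.continuousWithinAt)
    (fun x hx => (hlogd x (interior_subset hx)).differentiableAt.differentiableWithinAt)
    (C := K / q)
    (fun x hx => by
      rw [(hlogd x (interior_subset hx)).deriv]; exact hder x (interior_subset hx))
    h₀ (Set.left_mem_Icc.2 hh) h₁ (Set.right_mem_Icc.2 hh) hh
  have hlogP : ∀ h ∈ Set.Icc h₀ h₁, Real.log (1 + (c / (2 * m) * (Y h / A) ^ q - 1)) =
      Real.log (c / (2 * m)) + q * (Real.log (Y h) - Real.log A) := by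
    intro h hh'
    have hY := hYpos h hh'
    rw [add_sub_cancel, Real.log_mul hcm.ne' (by positivity), Real.log_rpow (by positivity),
      Real.log_div hY.ne' hA.ne']
  have hl0 : 0 ≤ Real.log (1 + (c / (2 * m) * (Y h₀ / A) ^ q - 1)) :=
    Real.log_nonneg (by linarith [hp h₀ (Set.left_mem_Icc.2 hh)])
  rw [hlogP h₀ (Set.left_mem_Icc.2 hh)] at hl0
  have hfin : K * (h₁ - h₀) ≤ Real.log (1 + (c / (2 * m) * (Y h₁ / A) ^ q - 1)) := by
    rw [hlogP h₁ (Set.right_mem_Icc.2 hh)]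
    have h3 := mul_le_mul_of_nonneg_left hmvt hq0.le
    have h4 : q * (K / q * (h₁ - h₀)) = K * (h₁ - h₀) := by field_simp
    rw [h4] at h3
    linarith
  have hcoef : 9 * Real.sqrt 3 * (2 : ℝ) ^ a / ((N - 2) * c ^ (1 + a)) * m ^ a = K⁻¹ := by
    rw [hK, hB]
    have := Real.rpow_pos_of_pos hc (1 + a)
    field_simp
  rw [hcoef, ← div_eq_inv_mul, le_div_iff₀ hK0, mul_comm]
  exact hfin
end
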